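/- Let q be a prime power. For all integers n, k with 1 ≤ k ≤ n/2, one has N(n,k) = Σ_{j=1}^{k} C(k−j+q−1, q−1) · N'(n+j−k, j), where C(·,·) denotes a binomial coefficient. -/

import Mathlib

open Polynomial

/-- Number of monic irreducible factors counted with multiplicity. -/
noncomputable def Omega {F : Type*} [Field F] (f : F[X]) : ℕ :=
  (UniqueFactorizationMonoid.factors f).card

/-- `Ncount F n k` = number of monic polynomials of degree `n` over `F` with `Omega f = k`. -/
noncomputable def Ncount (F : Type*) [Field F] (n k : ℕ) : ℕ :=
  Set.ncard {f : F[X] | f.Monic ∧ f.natDegree = n ∧ Omega f = k}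

/-- `Ncount' F n k` = number of monic polynomials of degree `n` over `F` with no root in `F`
and with `Omega f = k`. -/
noncomputable def Ncount' (F : Type*) [Field F] (n k : ℕ) : ℕ :=
  Set.ncard {f : F[X] | f.Monic ∧ f.natDegree = n ∧ (∀ a : F, f.eval a ≠ 0) ∧ Omega f = k}

/-!
A monic polynomial over a field factors uniquely as `∏ (X - a) * g`, where `a` runs over the
multiset of its roots and `g` is monic without roots. Removing `i` roots lowers both the degree and
`Omega` by `i`, and there are `multichoose q i` multisets of `i` elements of `F`. The polynomials
whose rootless part is `1` split completely and so have degree equal to `Omega`; hence no term with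
`j = 0` occurs as soon as `k < n`.
-/

theorem ncard_eq_sum_ncard_fiberwise {α β : Type*} {s : Set α} (hs : s.Finite) {f : α → β}
    {t : Finset β} (hf : Set.MapsTo f s t) : s.ncard = ∑ b ∈ t, {x ∈ s | f x = b}.ncard := by
  classical
  lift s to Finset α using hs
  rw [Set.ncard_coe_finset, Finset.card_eq_sum_card_fiberwise hf]
  refine Finset.sum_congr rfl fun b _ => ?_
  rw [← Set.ncard_coe_finset, Finset.coe_filter]
  rfl

theorem ncard_setOf_multiset_card_eq (α : Type*) (i : ℕ) :
    {s : Multiset α | s.card = i}.ncard = (Nat.card α).multichoose i :=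
  Sym.natCard_sym_eq_multichoose α i

theorem finite_setOf_natDegree_le (R : Type*) [Semiring R] [Finite R] (n : ℕ) :
    {f : R[X] | f.natDegree ≤ n}.Finite := by
  have : Finite (degreeLT R (n + 1)) := .of_equiv _ (degreeLTEquiv R (n + 1)).symm.toEquiv
  refine (Set.toFinite (degreeLT R (n + 1) : Set R[X])).subset fun f hf => mem_degreeLT.2 ?_
  exact degree_le_natDegree.trans_lt (WithBot.coe_lt_coe.2 (Nat.lt_succ_of_le hf))

section AttachRoots

variable {R : Type*} [CommRing R]

/-- The polynomial obtained from `g` by attaching the elements of the multiset `s` as roots, with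
multiplicity. It is used to write a monic polynomial in terms of its roots and a cofactor without
roots. -/
noncomputable def attachRoots (s : Multiset R) (g : R[X]) : R[X] :=
  (s.map fun a => X - C a).prod * g

theorem monic_attachRoots_iff {s : Multiset R} {g : R[X]} :
    (attachRoots s g).Monic ↔ g.Monic :=
  ⟨(monic_multisetProd_X_sub_C s).of_mul_monic_left, (monic_multisetProd_X_sub_C s).mul⟩

theorem natDegree_attachRoots (s : Multiset R) {g : R[X]} (hg : g ≠ 0) :
    (attachRoots s g).natDegree = g.natDegree + s.card := by
  have := Nontrivial.of_polynomial_ne hg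
  rw [attachRoots, (monic_multisetProd_X_sub_C s).natDegree_mul' hg,
    natDegree_multiset_prod_X_sub_C_eq_card, add_comm]

theorem roots_attachRoots [IsDomain R] (s : Multiset R) {g : R[X]} (hg : g ≠ 0) :
    (attachRoots s g).roots = s + g.roots := by
  rw [attachRoots, roots_mul (mul_ne_zero (monic_multisetProd_X_sub_C s).ne_zero hg),
    roots_multiset_prod_X_sub_C]

theorem roots_eq_zero_iff_forall_eval_ne_zero [IsDomain R] {g : R[X]} (hg : g ≠ 0) :
    g.roots = 0 ↔ ∀ a, g.eval a ≠ 0 := by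
  simp only [Multiset.eq_zero_iff_forall_notMem, mem_roots hg, IsRoot.def, ne_eq]

theorem bijOn_attachRoots [IsDomain R] :
    Set.BijOn (fun p : Multiset R × R[X] => attachRoots p.1 p.2)
      {p | p.2.Monic ∧ p.2.roots = 0} {f | f.Monic} := by
  refine ⟨fun p hp => monic_attachRoots_iff.2 hp.1, ?_, fun f hf => ?_⟩
  · rintro ⟨s, g⟩ ⟨hg, hg₀⟩ ⟨s', g'⟩ ⟨hg', hg₀'⟩ (h : attachRoots s g = attachRoots s' g')
    obtain rfl : s = s' := by
      simpa only [roots_attachRoots _ hg.ne_zero, roots_attachRoots _ hg'.ne_zero, hg₀, hg₀',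
        add_zero] using congrArg roots h
    rw [mul_left_cancel₀ (monic_multisetProd_X_sub_C s).ne_zero h]
  · obtain ⟨g, hfg, -, hg₀⟩ := exists_prod_multiset_X_sub_C_mul f
    exact ⟨(f.roots, g), ⟨monic_attachRoots_iff.1 (hfg.symm ▸ hf), hg₀⟩, hfg⟩

end AttachRoots

section Omega

variable {F : Type*} [Field F]

theorem Omega_mul {f g : F[X]} (hf : f ≠ 0) (hg : g ≠ 0) :
    Omega (f * g) = Omega f + Omega g :=
  (Multiset.card_eq_card_of_rel (UniqueFactorizationMonoid.factors_mul hf hg)).trans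
    (Multiset.card_add _ _)

theorem Omega_multiset_prod {s : Multiset F[X]} (hs : ∀ p ∈ s, Irreducible p) :
    Omega s.prod = s.card := by
  have hs₀ : s.prod ≠ 0 := Multiset.prod_ne_zero fun h => (hs 0 h).ne_zero rfl
  exact Multiset.card_eq_card_of_rel <| UniqueFactorizationMonoid.factors_unique
    UniqueFactorizationMonoid.irreducible_of_factor hs
    (UniqueFactorizationMonoid.factors_prod hs₀)

theorem Omega_eq_zero_iff {f : F[X]} (hf : f ≠ 0) : Omega f = 0 ↔ IsUnit f := by
  rw [Omega, Multiset.card_eq_zero, UniqueFactorizationMonoid.factors_eq_zero hf]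

theorem Omega_attachRoots (s : Multiset F) {g : F[X]} (hg : g ≠ 0) :
    Omega (attachRoots s g) = Omega g + s.card := by
  have hs : ∀ p ∈ s.map fun a => X - C a, Irreducible p :=
    Multiset.forall_mem_map_iff.2 fun a _ => irreducible_X_sub_C a
  rw [attachRoots, Omega_mul (monic_multisetProd_X_sub_C s).ne_zero hg, Omega_multiset_prod hs,
    Multiset.card_map, add_comm]

theorem card_roots_le_Omega {f : F[X]} (hf : f.Monic) : f.roots.card ≤ Omega f := by
  obtain ⟨⟨s, g⟩, ⟨hg, hg₀⟩, rfl⟩ := bijOn_attachRoots.surjOn hf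
  rw [roots_attachRoots s hg.ne_zero, Omega_attachRoots s hg.ne_zero, hg₀, add_zero]
  exact Nat.le_add_left _ _

end Omega

section Counting

variable (F : Type*) [Field F]

theorem Ncount'_zero_right {n : ℕ} (hn : n ≠ 0) : Ncount' F n 0 = 0 := by
  suffices h : {f : F[X] | f.Monic ∧ f.natDegree = n ∧ (∀ a, f.eval a ≠ 0) ∧ Omega f = 0} = ∅ by
    rw [Ncount', h, Set.ncard_empty]
  refine Set.eq_empty_of_forall_notMem fun f ⟨hf, hdeg, _, hΩ⟩ => hn ?_
  rw [← hdeg, natDegree_eq_zero_of_isUnit ((Omega_eq_zero_iff hf.ne_zero).1 hΩ)]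

theorem ncard_monic_card_roots_eq (m l i : ℕ) :
    {f : F[X] | f.Monic ∧ f.natDegree = m + i ∧ Omega f = l + i ∧ f.roots.card = i}.ncard =
      (Nat.card F).multichoose i * Ncount' F m l := by
  rw [Ncount', ← ncard_setOf_multiset_card_eq, ← Set.ncard_prod,
    ← (bijOn_attachRoots.subset_right fun f hf => hf.1).ncard_eq]
  congr 1
  ext ⟨s, g⟩
  constructor
  · rintro ⟨⟨hg, hg₀⟩, -, hdeg, hΩ, hroots⟩
    rw [natDegree_attachRoots s hg.ne_zero] at hdeg
    rw [Omega_attachRoots s hg.ne_zero] at hΩ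
    rw [roots_attachRoots s hg.ne_zero, hg₀, add_zero] at hroots
    rw [hroots] at hdeg hΩ
    exact ⟨hroots, hg, Nat.add_right_cancel hdeg,
      (roots_eq_zero_iff_forall_eval_ne_zero hg.ne_zero).1 hg₀, Nat.add_right_cancel hΩ⟩
  · rintro ⟨rfl, hg, rfl, heval, rfl⟩
    have hg₀ : g.roots = 0 := (roots_eq_zero_iff_forall_eval_ne_zero hg.ne_zero).2 heval
    refine ⟨⟨hg, hg₀⟩, monic_attachRoots_iff.2 hg, natDegree_attachRoots s hg.ne_zero,
      Omega_attachRoots s hg.ne_zero, ?_⟩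
    rw [roots_attachRoots s hg.ne_zero, hg₀, add_zero]

theorem Ncount_add_eq_sum [Finite F] (m k : ℕ) :
    Ncount F (m + k) k =
      ∑ j ∈ Finset.range (k + 1), (Nat.card F).multichoose (k - j) * Ncount' F (m + j) j := by
  have hfin : {f : F[X] | f.Monic ∧ f.natDegree = m + k ∧ Omega f = k}.Finite :=
    (finite_setOf_natDegree_le F (m + k)).subset fun f hf => hf.2.1.le
  have hmaps : Set.MapsTo (fun f : F[X] => k - f.roots.card)
      {f | f.Monic ∧ f.natDegree = m + k ∧ Omega f = k} (Finset.range (k + 1)) := fun f _ =>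
    Finset.mem_coe.2 (Finset.mem_range_succ_iff.2 (Nat.sub_le _ _))
  rw [Ncount, ncard_eq_sum_ncard_fiberwise hfin hmaps]
  refine Finset.sum_congr rfl fun j hj => ?_
  rw [Finset.mem_range_succ_iff] at hj
  rw [← ncard_monic_card_roots_eq, add_assoc, Nat.add_sub_cancel' hj]
  congr 1
  ext f
  constructor
  · rintro ⟨⟨hf, hdeg, hΩ⟩, hroots⟩
    have hle : f.roots.card ≤ k := (card_roots_le_Omega hf).trans_eq hΩ
    exact ⟨hf, hdeg, hΩ, by omega⟩
  · rintro ⟨hf, hdeg, hΩ, hroots⟩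
    exact ⟨⟨hf, hdeg, hΩ⟩, by omega⟩

end Counting

theorem multichoose_eq_choose_pred {q : ℕ} (hq : q ≠ 0) (i : ℕ) :
    q.multichoose i = (i + q - 1).choose (q - 1) := by
  rw [Nat.multichoose_eq, add_comm q i]
  exact Nat.choose_symm_of_eq_add (by omega)

theorem stmt4_general (q : ℕ) (F : Type*) [Field F] [Fintype F] (hF : Fintype.card F = q)
    (n k : ℕ) (hkn : k < n) :
    Ncount F n k =
      ∑ j ∈ Finset.Icc 1 k, Nat.choose (k - j + q - 1) (q - 1) * Ncount' F (n + j - k) j := by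
  have hq : Nat.card F = q := Nat.card_eq_fintype_card.trans hF
  have hq₀ : q ≠ 0 := hF ▸ Fintype.card_ne_zero
  obtain ⟨m, rfl⟩ := Nat.exists_eq_add_of_le' hkn.le
  have hm : m ≠ 0 := by omega
  have hdeg (j : ℕ) : m + k + j - k = m + j := by omega
  simp only [Ncount_add_eq_sum, hq, hdeg, ← multichoose_eq_choose_pred hq₀]
  refine (Finset.sum_subset (fun j hj => ?_) fun j hj hj' => ?_).symm
  · exact Finset.mem_range_succ_iff.2 (Finset.mem_Icc.1 hj).2
  · obtain rfl : j = 0 := by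
      rw [Finset.mem_range] at hj
      rw [Finset.mem_Icc] at hj'
      omega
    rw [add_zero, Ncount'_zero_right F hm, mul_zero]

theorem stmt4 (q : ℕ) (hq : IsPrimePow q) (F : Type*) [Field F] [Fintype F]
    (hF : Fintype.card F = q) (n k : ℕ) (hk : 1 ≤ k) (hkn : 2 * k ≤ n) :
    Ncount F n k =
      ∑ j ∈ Finset.Icc 1 k, Nat.choose (k - j + q - 1) (q - 1) * Ncount' F (n + j - k) j :=
  stmt4_general q F hF n k (by omega)
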